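/- Easy model structure on the arrow category: Let M be a model category whose underlying category is locally presentable and which is cofibrantly generated, i.e. there are sets of morphisms I and J' of M such that the fibrations of M are exactly the morphisms having the right lifting property with respect to every member of J', and the trivial fibrations of M are exactly the morphisms having the right lifting property with respect to every member of I. Then the arrow category of M (the functor category [1] ⥤ M, where [1] = {0 → 1} is the walking-morphism category) carries a model structure in which a morphism σ : F ⟶ G is a weak equivalence if and only if its component σ_0 : F(0) → G(0) at the source object 0 is a weak equivalence in M, and σ is a fibration if and only if σ_0 is a fibration in M. -/

import Mathlib

/-!
Easy model structure on the arrow category: if `M` is a locally presentable,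
cofibrantly generated model category, then the arrow category of `M` (the
category of functors `[1] ⥤ M`, i.e. of morphisms of `M` and commutative
squares) carries a model structure in which a morphism `σ` is a weak
equivalence (resp. a fibration) if and only if its component `σ.left` between
the sources is a weak equivalence (resp. a fibration) in `M`.
-/

universe u₂ v₂
open CategoryTheory Limits

universe v u

namespace CoSegal

variable {C : Type u} [Category.{v} C]

/-- `f` is a retract of `g`, i.e. `f` is a retract of `g` as objects of the
arrow category of `C`. -/
def IsRetractOf {X Y Z W : C} (f : X ⟶ Y) (g : Z ⟶ W) : Prop :=
  ∃ (i : Arrow.mk f ⟶ Arrow.mk g) (r : Arrow.mk g ⟶ Arrow.mk f),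
    i ≫ r = 𝟙 (Arrow.mk f)

/-- a class of morphisms is stable under retracts if any retract of a morphism
of the class belongs to the class. -/
def StableUnderRetracts (P : MorphismProperty C) : Prop :=
  ∀ ⦃X Y Z W : C⦄ (f : X ⟶ Y) (g : Z ⟶ W), IsRetractOf f g → P g → P f

/-- A (closed) model structure on a category `C`, with class of weak
equivalences `W`, class of cofibrations `Cof` and class of fibrations `Fib`:
`W` satisfies two-out-of-three, the three classes are stable under retracts,
cofibrations have the left lifting property against trivial fibrations,
trivial cofibrations have the left lifting property against fibrations, and
every morphism factors as a (trivial) cofibration followed by a (trivial)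
fibration.  (A model category is a complete and cocomplete category equipped
with such a model structure.) -/
structure IsModelStructure (W Cof Fib : MorphismProperty C) : Prop where
  two_out_of_three : W.HasTwoOutOfThreeProperty
  weq_retract : StableUnderRetracts W
  cof_retract : StableUnderRetracts Cof
  fib_retract : StableUnderRetracts Fib
  lift_cof_trivFib : ∀ ⦃A B X Y : C⦄ (i : A ⟶ B) (p : X ⟶ Y),
    Cof i → Fib p → W p → HasLiftingProperty i p
  lift_trivCof_fib : ∀ ⦃A B X Y : C⦄ (i : A ⟶ B) (p : X ⟶ Y),
    Cof i → W i → Fib p → HasLiftingProperty i p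
  fac_cof_trivFib : MorphismProperty.HasFactorization Cof (Fib ⊓ W)
  fac_trivCof_fib : MorphismProperty.HasFactorization (Cof ⊓ W) Fib

end CoSegal
namespace CoSegal

open CategoryTheory Limits Opposite

/-- A category `J` is `κ`-filtered (for a cardinal `κ`) if every functor to `J`
from a small category with fewer than `κ` morphisms admits a cocone. -/
def IsCardinalFiltered (J : Type u₂) [Category.{v₂} J] (κ : Cardinal.{v}) : Prop :=
  ∀ A : Cat.{v, v}, Cardinal.mk (Arrow A) < κ → ∀ F : A ⥤ J, Nonempty (Cocone F)

/-- An object `X` of a category `C` is `κ`-presentable if the functor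
`Hom(X, -) : C ⥤ Type` preserves colimits indexed by `κ`-filtered small
categories. -/
def IsCardinalPresentable {C : Type u} [Category.{v} C] (X : C)
    (κ : Cardinal.{v}) : Prop :=
  ∀ J : Cat.{v, v}, IsCardinalFiltered J κ →
    PreservesColimitsOfShape J (coyoneda.obj (op X))

/-- A category `C` is locally presentable if it is cocomplete and accessible:
there is a regular cardinal `κ` and a small family of `κ`-presentable objects
such that every object of `C` is the colimit of a `κ`-filtered diagram whose
values are (isomorphic to) objects of the family. -/
def IsLocallyPresentable (C : Type u) [Category.{v} C] : Prop :=
  HasColimits C ∧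
    ∃ κ : Cardinal.{v}, κ.IsRegular ∧
      ∃ (ι : Type v) (G : ι → C),
        (∀ i, IsCardinalPresentable (G i) κ) ∧
        ∀ X : C, ∃ (J : Cat.{v, v}) (_ : IsCardinalFiltered J κ) (F : J ⥤ C)
          (c : Cocone F),
            (∀ j : J, ∃ i, Nonempty (F.obj j ≅ G i)) ∧
            Nonempty (IsColimit c) ∧ Nonempty (c.pt ≅ X)

end CoSegal

namespace CoSegal

open CategoryTheory Limits

/-- the class of morphisms having the right lifting property with respect to
every member of a family of morphisms. -/
def rlpAgainstFamily {C : Type u} [Category.{v} C] {ι : Type u₂}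
    (S : ι → Arrow C) : MorphismProperty C :=
  fun _ _ p => ∀ i, HasLiftingProperty (S i).hom p

end CoSegal

open CategoryTheory Limits

/-!
Take as cofibrations of the arrow category the pushout squares whose source component is a
cofibration. A lift of the source components against a pushout square extends uniquely to the target
components by the universal property, so the lifting axioms reduce to those of `M`. To factor
`σ : F ⟶ G`, factor `σ.left` in `M` and push `F.hom` out along the first factor. Weak equivalences
and fibrations are inverse images under the source functor, and pushout squares are stable under
retracts.
-/

namespace CoSegal

variable {C : Type u} [Category.{v} C]

theorem stableUnderRetracts_iff {P : MorphismProperty C} :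
    StableUnderRetracts P ↔ P.IsStableUnderRetracts where
  mp h := ⟨fun r => h _ _ ⟨r.i, r.r, r.retract⟩⟩
  mpr _ _ _ _ _ _ _ := fun ⟨i, r, retract⟩ => P.of_retract ⟨i, r, retract⟩

theorem isPushout_of_retract {sq sq' : Square C} (h : Retract sq sq') (hsq' : sq'.IsPushout) :
    sq.IsPushout := by
  have retract₂ : h.i.τ₂ ≫ h.r.τ₂ = 𝟙 sq.X₂ := (h.map Square.evaluation₂).retract
  have retract₃ : h.i.τ₃ ≫ h.r.τ₃ = 𝟙 sq.X₃ := (h.map Square.evaluation₃).retract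
  have retract₄ : h.i.τ₄ ≫ h.r.τ₄ = 𝟙 sq.X₄ := (h.map Square.evaluation₄).retract
  have jointly_epi {T : C} {m m' : sq.X₄ ⟶ T} (h₂ : sq.f₂₄ ≫ m = sq.f₂₄ ≫ m')
      (h₃ : sq.f₃₄ ≫ m = sq.f₃₄ ≫ m') : m = m' := by
    have : h.r.τ₄ ≫ m = h.r.τ₄ ≫ m' :=
      IsPushout.hom_ext hsq' (by simp only [h.r.comm₂₄_assoc, h₂])
        (by simp only [h.r.comm₃₄_assoc, h₃])
    rw [← Category.id_comp m, ← retract₄, Category.assoc, this, reassoc_of% retract₄]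
  have exists_desc (s : PushoutCocone sq.f₁₂ sq.f₁₃) :
      ∃ d : sq.X₄ ⟶ s.pt, sq.f₂₄ ≫ d = s.inl ∧ sq.f₃₄ ≫ d = s.inr := by
    obtain ⟨d', h₂, h₃⟩ := IsPushout.exists_desc hsq' (h.r.τ₂ ≫ s.inl) (h.r.τ₃ ≫ s.inr)
      (by rw [h.r.comm₁₂_assoc, h.r.comm₁₃_assoc, s.condition])
    exact ⟨h.i.τ₄ ≫ d', by rw [h.i.comm₂₄_assoc, h₂, reassoc_of% retract₂],
      by rw [h.i.comm₃₄_assoc, h₃, reassoc_of% retract₃]⟩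
  choose desc inl_desc inr_desc using exists_desc
  exact .mk _ <| PushoutCocone.IsColimit.mk _ desc inl_desc inr_desc fun s _ h₂ h₃ =>
    jointly_epi (h₂.trans (inl_desc s).symm) (h₃.trans (inr_desc s).symm)

variable (C) in
/-- The morphisms of the arrow category which are pushout squares in `C`, i.e. the cocartesian
morphisms for the source functor `Arrow C ⥤ C`. -/
def pushoutSquares : MorphismProperty (Arrow C) :=
  fun A B σ => IsPushout σ.left A.hom B.hom σ.right

instance isStableUnderRetracts_pushoutSquares : (pushoutSquares C).IsStableUnderRetracts where
  of_retract h hg := isPushout_of_retract (Retract.map h Square.fromArrowArrowFunctor) hg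

theorem hasLiftingProperty_of_hasLiftingProperty_left {A B X Y : Arrow C} {i : A ⟶ B} {p : X ⟶ Y}
    (hi : pushoutSquares C i) (hip : HasLiftingProperty i.left p.left) :
    HasLiftingProperty i p where
  sq_hasLift {f g} sq := by
    have sq_left : CommSq f.left i.left p.left g.left := sq.map Arrow.leftFunc
    have sq_right : f.right ≫ p.right = i.right ≫ g.right := (sq.map Arrow.rightFunc).w
    have compat : i.left ≫ sq_left.lift ≫ X.hom = A.hom ≫ f.right := by
      rw [sq_left.fac_left_assoc, Arrow.w]
    obtain ⟨l, inl_l, inr_l⟩ := IsPushout.exists_desc hi _ _ compat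
    have l_comp : l ≫ p.right = g.right := by
      apply IsPushout.hom_ext hi
      · rw [reassoc_of% inl_l, ← Arrow.w p, sq_left.fac_right_assoc, Arrow.w]
      · rw [reassoc_of% inr_l, sq_right]
    exact ⟨⟨{ l := Arrow.homMk sq_left.lift l inl_l.symm
              fac_left := Arrow.hom_ext _ _ sq_left.fac_left inr_l
              fac_right := Arrow.hom_ext _ _ sq_left.fac_right l_comp }⟩⟩

theorem hasFactorization_inverseImage_leftFunc_inf_pushoutSquares [HasPushouts C]
    (P Q : MorphismProperty C) [P.HasFactorization Q] :
    (P.inverseImage Arrow.leftFunc ⊓ pushoutSquares C).HasFactorization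
      (Q.inverseImage Arrow.leftFunc) where
  nonempty_mapFactorizationData {X Y} σ := by
    let d := P.factorizationData Q σ.left
    have compat : d.i ≫ d.p ≫ Y.hom = X.hom ≫ σ.right := by
      rw [d.fac_assoc, Arrow.w]
    exact ⟨{
      Z := Arrow.mk (pushout.inl d.i X.hom)
      i := Arrow.homMk d.i (pushout.inr d.i X.hom) pushout.condition
      p := Arrow.homMk d.p (pushout.desc (d.p ≫ Y.hom) σ.right compat)
        (pushout.inl_desc _ _ _).symm
      fac := Arrow.hom_ext _ _ d.fac (pushout.inr_desc _ _ _)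
      hi := ⟨d.hi, IsPushout.of_hasPushout _ _⟩
      hp := d.hp }⟩

end CoSegal

open CoSegal in
theorem easy_model_structure_on_arrow_category_general
    {M : Type u} [Category.{v} M] [HasPushouts M] {W Cof Fib : MorphismProperty M}
    (hmodel : IsModelStructure W Cof Fib) :
    IsModelStructure (W.inverseImage Arrow.leftFunc)
      (Cof.inverseImage Arrow.leftFunc ⊓ pushoutSquares M)
      (Fib.inverseImage Arrow.leftFunc) := by
  have := hmodel.two_out_of_three
  have := hmodel.fac_cof_trivFib
  have := hmodel.fac_trivCof_fib
  have := stableUnderRetracts_iff.1 hmodel.weq_retract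
  have := stableUnderRetracts_iff.1 hmodel.cof_retract
  have := stableUnderRetracts_iff.1 hmodel.fib_retract
  exact
    { two_out_of_three := inferInstance
      weq_retract := stableUnderRetracts_iff.2 inferInstance
      cof_retract := stableUnderRetracts_iff.2 inferInstance
      fib_retract := stableUnderRetracts_iff.2 inferInstance
      lift_cof_trivFib := fun _ _ _ _ _ _ hi hp hw =>
        hasLiftingProperty_of_hasLiftingProperty_left hi.2
          (hmodel.lift_cof_trivFib _ _ hi.1 hp hw)
      lift_trivCof_fib := fun _ _ _ _ _ _ hi hw hp =>
        hasLiftingProperty_of_hasLiftingProperty_left hi.2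
          (hmodel.lift_trivCof_fib _ _ hi.1 hw hp)
      fac_cof_trivFib :=
        hasFactorization_inverseImage_leftFunc_inf_pushoutSquares Cof (Fib ⊓ W)
      fac_trivCof_fib := by
        rw [inf_right_comm]
        exact hasFactorization_inverseImage_leftFunc_inf_pushoutSquares (Cof ⊓ W) Fib }

theorem easy_model_structure_on_arrow_category
    {M : Type u} [Category.{v} M] [HasLimits M]
    (hpres : CoSegal.IsLocallyPresentable M)
    (W Cof Fib : MorphismProperty M)
    (hmodel : CoSegal.IsModelStructure W Cof Fib)
    {ιI ιJ : Type v} (I : ιI → Arrow M) (J' : ιJ → Arrow M)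
    (hFib : Fib = CoSegal.rlpAgainstFamily J')
    (hTrivFib : Fib ⊓ W = CoSegal.rlpAgainstFamily I) :
    ∃ Cof' : MorphismProperty (Arrow M),
      CoSegal.IsModelStructure
        (fun (F G : Arrow M) (σ : F ⟶ G) => W σ.left) Cof'
        (fun (F G : Arrow M) (σ : F ⟶ G) => Fib σ.left) := by
  have : HasColimits M := hpres.1
  exact ⟨_, easy_model_structure_on_arrow_category_general hmodel⟩
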